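/- For every cover of S^d by d antipodally symmetric closed sets F_1,…,F_d, at least one F_i contains a pair of antipodal points in the same connected component of F_i. (Signed Borsuk–Ulam, closed form) -/

import Mathlib

namespace SBU

def ng (a : ℕ) : ℕ := if a % 2 = 0 then a + 1 else a - 1

def g : List ℕ → Bool → ZMod 2
  | [], _ => 1
  | a :: l, b => if decide (a % 2 = 0) = b then g l (!b) else 0

def D {α : Type*} [DecidableEq α] (h : Multiset α → ZMod 2) (M : Multiset α) : ZMod 2 :=
  (M.map fun a => h (M.erase a)).sum

lemma D_cons {α : Type*} [DecidableEq α] (h : Multiset α → ZMod 2) (z : α) (M : Multiset α) :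
    D h (z ::ₘ M) = h M + D (fun L => h (z ::ₘ L)) M := by
  unfold D
  rw [Multiset.map_cons, Multiset.sum_cons, Multiset.erase_cons_head]
  congr 2
  apply Multiset.map_congr rfl
  intro a ha
  by_cases e : a = z
  · subst e
    rw [Multiset.erase_cons_head]
    simp only [Multiset.cons_erase ha]
  · rw [Multiset.erase_cons_tail_of_mem ha]

lemma D_map {α β : Type*} [DecidableEq α] [DecidableEq β] (f : α → β) (h : Multiset β → ZMod 2)
    (M : Multiset α) : D (fun L => h (L.map f)) M = D h (M.map f) := by
  unfold D
  rw [Multiset.map_map]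
  congr 1
  apply Multiset.map_congr rfl
  intro a ha
  simp only [Function.comp]
  rw [Multiset.map_erase_of_mem _ _ ha]

def Ph (b : Bool) (M : Multiset ℕ) : ZMod 2 := g (M.sort (· ≤ ·)) b

lemma Ph_cons (b : Bool) (x : ℕ) (M : Multiset ℕ) (hx : ∀ y ∈ M, x ≤ y) :
    Ph b (x ::ₘ M) = if decide (x % 2 = 0) = b then Ph (!b) M else 0 := by
  unfold Ph
  rw [Multiset.sort_cons _ _ _ hx, g]

lemma multiset_min_induction {p : Multiset ℕ → Prop} (h0 : p 0)
    (h1 : ∀ x M, (∀ y ∈ M, x ≤ y) → p M → p (x ::ₘ M)) (M : Multiset ℕ) : p M := by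
  have key : ∀ l : List ℕ, l.Pairwise (· ≤ ·) → p (l : Multiset ℕ) := by
    intro l
    induction l with
    | nil => intro _; exact h0
    | cons a l ih =>
      intro hl
      rw [List.pairwise_cons] at hl
      exact h1 a l (by simpa using hl.1) (ih hl.2)
  have := key (M.sort (· ≤ ·)) (Multiset.pairwise_sort _ _)
  rwa [Multiset.sort_eq] at this

lemma D_congr {α : Type*} [DecidableEq α] (h h' : Multiset α → ZMod 2) (M : Multiset α)
    (H : ∀ L ≤ M, h L = h' L) : D h M = D h' M := by
  unfold D
  congr 1
  apply Multiset.map_congr rfl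
  intro a _
  exact H _ (Multiset.erase_le _ _)

lemma D_zero {α : Type*} [DecidableEq α] (M : Multiset α) :
    D (fun _ => 0) M = 0 := by
  unfold D
  simp

lemma D_Ph (M : Multiset ℕ) : ∀ b, D (Ph b) M = Ph b M + Ph (!b) M := by
  induction M using multiset_min_induction with
  | h0 => intro b; simp [D, Ph, g]; rfl
  | h1 x M hx ih =>
    intro b
    rw [D_cons, Ph_cons _ _ _ hx, Ph_cons _ _ _ hx,
      D_congr _ (fun L => if decide (x % 2 = 0) = b then Ph (!b) L else 0) M
        (fun L hL => Ph_cons _ _ _ (fun y hy => hx y (Multiset.mem_of_le hL hy)))]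
    by_cases e : decide (x % 2 = 0) = b
    · have e' : ¬ decide (x % 2 = 0) = !b := by rw [e]; cases b <;> simp
      simp only [e, if_true, ih (!b), Bool.not_not]
      have : ¬ b = !b := by cases b <;> simp
      rw [if_neg this]
      have h2 := CharTwo.add_self_eq_zero (Ph b M)
      linear_combination h2
    · have e' : decide (x % 2 = 0) = !b := by
        revert e; cases b <;> cases decide (x % 2 = 0) <;> simp
      have : ¬ (!b) = b := by cases b <;> simp
      simp only [e', if_true, Bool.not_not, if_neg this, D_zero]
      ring

lemma Ph_neg (M : Multiset ℕ) : (∀ x ∈ M, ∀ y ∈ M, y ≠ ng x) → ∀ b,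
    Ph b (M.map ng) = Ph (!b) M := by
  induction M using multiset_min_induction with
  | h0 => intro _ b; simp [Ph, g]
  | h1 x M hx ih =>
    intro H b
    rw [Multiset.map_cons, Ph_cons _ _ _ hx, Ph_cons]
    · rw [ih (fun u hu v hv => H u (Multiset.mem_cons_of_mem hu) v (Multiset.mem_cons_of_mem hv))]
      have : decide (ng x % 2 = 0) = !decide (x % 2 = 0) := by
        unfold ng
        by_cases h : x % 2 = 0
        · rw [if_pos h]; simp [h]; omega
        · rw [if_neg h]; simp [h]; omega
      rw [this]
      congr 1
      cases b <;> simp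
    · intro y hy
      obtain ⟨w, hw, rfl⟩ := Multiset.mem_map.1 hy
      have h1 := H x (Multiset.mem_cons_self _ _) w (Multiset.mem_cons_of_mem hw)
      have h2 := hx w hw
      unfold ng at *
      split_ifs at * <;> omega

lemma Ph_len (d : ℕ) (M : Multiset ℕ) : (∀ x ∈ M, ∀ y ∈ M, y ≠ ng x) →
    (∀ x ∈ M, x < 2 * d) → ∀ b, Ph b M ≠ 0 → ∀ c, c ≤ d → (∀ x ∈ M, 2 * c ≤ x) →
      M.card + c ≤ d := by
  induction M using multiset_min_induction with
  | h0 => intro _ _ b _ c hc _; simpa using hc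
  | h1 x M hx ih =>
    intro H hd b hb c hc hxc
    rw [Ph_cons _ _ _ hx] at hb
    have e : decide (x % 2 = 0) = b := by
      by_contra e
      rw [if_neg e] at hb; exact hb rfl
    rw [if_pos e] at hb
    have hxd := hd x (Multiset.mem_cons_self _ _)
    have hxc' := hxc x (Multiset.mem_cons_self _ _)
    have := ih (fun u hu v hv => H u (Multiset.mem_cons_of_mem hu) v (Multiset.mem_cons_of_mem hv))
      (fun u hu => hd u (Multiset.mem_cons_of_mem hu)) (!b) hb (c + 1) (by omega) ?_
    · rw [Multiset.card_cons]; omega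
    · -- the least element of M has opposite sign
      intro y hy
      have hmin : ∃ y0 ∈ M, (∀ y ∈ M, y0 ≤ y) ∧ decide (y0 % 2 = 0) = !b := by
        clear ih
        induction M using multiset_min_induction with
        | h0 => simp at hy
        | h1 w M hw _ =>
          refine ⟨w, Multiset.mem_cons_self _ _, ?_, ?_⟩
          · intro y hy
            rcases Multiset.mem_cons.1 hy with h | h
            · exact h.ge
            · exact hw y h
          · rw [Ph_cons _ _ _ hw] at hb
            by_contra e
            rw [if_neg e] at hb; exact hb rfl
      obtain ⟨y0, hy0, hle, hs⟩ := hmin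
      have h1 := H x (Multiset.mem_cons_self _ _) y0 (Multiset.mem_cons_of_mem hy0)
      have h2 := hx y0 hy0
      have h3 := hle y hy
      have h4 : ¬ (decide (y0 % 2 = 0) = decide (x % 2 = 0)) := by rw [hs, e]; cases b <;> simp
      have h5 : ¬ (y0 % 2 = 0 ↔ x % 2 = 0) := by
        intro h; apply h4; simp [h]
      unfold ng at h1
      split_ifs at h1 <;> omega

lemma g_eq (l : List ℕ) : ∀ b, g l b = if (∀ i (h : i < l.length),
    decide (l[i] % 2 = 0) = (b ^^ decide (i % 2 = 1))) then 1 else 0 := by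
  induction l with
  | nil => intro b; simp [g]
  | cons a l ih =>
    intro b
    rw [g, ih, ← ite_and]
    congr 1
    apply propext
    constructor
    · rintro ⟨h1, h2⟩ i hi
      cases i with
      | zero => simpa using h1
      | succ i =>
        have := h2 i (by simpa using hi)
        simp only [List.getElem_cons_succ]
        rw [this]
        rcases Nat.mod_two_eq_zero_or_one i with h | h
        · have : (i+1) % 2 = 1 := by omega
          simp [h, this]
        · have : (i+1) % 2 = 0 := by omega
          simp [h, this]
    · intro H
      refine ⟨by have := H 0 (by simp); rw [List.getElem_cons_zero] at this; simpa using this, fun i hi => ?_⟩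
      have := H (i+1) (by simpa using hi)
      simp only [List.getElem_cons_succ] at this
      rw [this]
      rcases Nat.mod_two_eq_zero_or_one i with h | h
      · have : (i+1) % 2 = 1 := by omega
        simp [h, this]
      · have : (i+1) % 2 = 0 := by omega
        simp [h, this]

section grid
variable {m : ℕ}

def ee (i : Fin m) : Fin m → ℤ := Pi.single i 1

def W : ℕ → Finset (Fin m) → (Fin m → ℤ) → (Multiset (Fin m → ℤ) → ZMod 2) → ZMod 2
  | 0, _, z, h => h {z}
  | k+1, S, z, h => ∑ i ∈ S, W k (S.erase i) (z + ee i) (fun L => h (z ::ₘ L))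

lemma W_add (k : ℕ) : ∀ (S : Finset (Fin m)) z h h',
    W k S z (fun L => h L + h' L) = W k S z h + W k S z h' := by
  induction k with
  | zero => intros; rfl
  | succ k ih =>
    intro S z h h'
    simp only [W, ih, Finset.sum_add_distrib]

lemma sum_pair_swap (S : Finset (Fin m)) (f : Fin m → Fin m → ZMod 2) :
    ∑ i ∈ S, ∑ j ∈ S.erase i, f i j = ∑ j ∈ S, ∑ i ∈ S.erase j, f i j := by
  apply Finset.sum_comm'
  intro x y
  simp only [Finset.mem_erase]
  tauto

lemma sum_pair_sym (S : Finset (Fin m)) (f : Fin m → Fin m → ZMod 2) (hf : ∀ i j, f i j = f j i) :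
    ∑ i ∈ S, ∑ j ∈ S.erase i, f i j = 0 := by
  induction S using Finset.induction_on with
  | empty => simp
  | insert a S ha ih =>
    rw [Finset.sum_insert ha, Finset.erase_insert ha]
    have : ∑ x ∈ S, ∑ j ∈ (insert a S).erase x, f x j
        = ∑ x ∈ S, (f x a + ∑ j ∈ S.erase x, f x j) := by
      apply Finset.sum_congr rfl
      intro x hx
      have hne : a ≠ x := fun e => ha (e ▸ hx)
      rw [Finset.erase_insert_of_ne hne, Finset.sum_insert]
      simp [ha]
    rw [this, Finset.sum_add_distrib, ih, add_zero]
    rw [Finset.sum_congr rfl (fun x _ => hf a x)]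
    exact CharTwo.add_self_eq_zero _

lemma W_D (k : ℕ) : ∀ (S : Finset (Fin m)) z h,
    W (k+1) S z (D h) = ∑ i ∈ S, (W k (S.erase i) (z + ee i) h + W k (S.erase i) z h) := by
  induction k with
  | zero =>
    intro S z h
    simp only [W]
    apply Finset.sum_congr rfl
    intro i _
    rw [D_cons]
    simp [D]
  | succ k ih =>
    intro S z h
    rw [W]
    simp only [D_cons, W_add, ih, Finset.sum_add_distrib]
    congr 1
    rw [sum_pair_sym S (fun i j => W k ((S.erase i).erase j) (z + ee i + ee j)
      (fun L => h (z ::ₘ L))), zero_add, sum_pair_swap]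
    · apply Finset.sum_congr rfl
      intro j _
      rw [W]
      apply Finset.sum_congr rfl
      intro i _
      rw [Finset.erase_right_comm]
    · intro i j
      rw [Finset.erase_right_comm, add_right_comm]

def one (S : Finset (Fin m)) : Fin m → ℤ := fun i => if i ∈ S then 1 else 0

lemma one_erase (S : Finset (Fin m)) (i : Fin m) (hi : i ∈ S) : ee i + one (S.erase i) = one S := by
  ext j
  simp only [ee, one, Pi.add_apply, Pi.single_apply, Finset.mem_erase]
  by_cases h : j = i
  · subst h; simp [hi]
  · simp [h]

lemma W_last (k : ℕ) : ∀ (S : Finset (Fin m)) z h, S.card = k + 1 →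
    W (k+1) S z h = ∑ i ∈ S, W k (S.erase i) z (fun L => h ((z + one S) ::ₘ L)) := by
  induction k with
  | zero =>
    intro S z h hS
    simp only [W]
    apply Finset.sum_congr rfl
    intro i hi
    have : S.erase i = ∅ := by
      rw [← Finset.card_eq_zero, Finset.card_erase_of_mem hi, hS]
    have h1 := one_erase S i hi
    rw [this] at h1
    have h2 : one (∅ : Finset (Fin m)) = 0 := by ext; simp [one]
    rw [h2, add_zero] at h1
    rw [h1]
    congr 1
    exact Multiset.cons_swap _ _ _
  | succ k ih =>
    intro S z h hS
    rw [W]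
    have : ∀ i ∈ S, W (k+1) (S.erase i) (z + ee i) (fun L => h (z ::ₘ L))
        = ∑ j ∈ S.erase i, W k ((S.erase i).erase j) (z + ee i)
            (fun L => h ((z + one S) ::ₘ z ::ₘ L)) := by
      intro i hi
      rw [ih _ _ _ (by rw [Finset.card_erase_of_mem hi, hS]; rfl)]
      apply Finset.sum_congr rfl
      intro j _
      congr 1
      ext L
      rw [add_assoc, one_erase S i hi, Multiset.cons_swap]
    rw [Finset.sum_congr rfl this, sum_pair_swap]
    apply Finset.sum_congr rfl
    intro j _
    rw [W]
    apply Finset.sum_congr rfl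
    intro i _
    rw [Finset.erase_right_comm]

lemma W_neg (k : ℕ) : ∀ (S : Finset (Fin m)) z h, S.card = k →
    W k S (-z - one S) h = W k S z (fun L => h (L.map (fun v => -v))) := by
  induction k with
  | zero =>
    intro S z h hS
    have : S = ∅ := Finset.card_eq_zero.1 hS
    subst this
    have h2 : one (∅ : Finset (Fin m)) = 0 := by ext; simp [one]
    simp [W, h2]
  | succ k ih =>
    intro S z h hS
    rw [W_last k S _ _ hS, W]
    apply Finset.sum_congr rfl
    intro i hi
    have h1 : -z - one S = -(z + ee i) - one (S.erase i) := by
      rw [← one_erase S i hi]; abel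
    have h2 : -z - one S + one S = -z := by abel
    rw [h2, h1, ih _ _ _ (by rw [Finset.card_erase_of_mem hi, hS]; rfl)]
    simp

lemma W_congr (k : ℕ) : ∀ (S : Finset (Fin m)) z h h',
    (∀ M : Multiset (Fin m → ℤ), M.card = k + 1 →
      (∀ v ∈ M, ∀ i, z i ≤ v i ∧ v i ≤ z i + one S i) → h M = h' M) →
    W k S z h = W k S z h' := by
  induction k with
  | zero =>
    intro S z h h' H
    apply H
    · simp
    · intro v hv i
      rw [Multiset.mem_singleton] at hv
      subst hv
      unfold one
      split_ifs <;> simp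
  | succ k ih =>
    intro S z h h' H
    rw [W, W]
    apply Finset.sum_congr rfl
    intro i hi
    apply ih
    intro M hM hv
    apply H
    · simp [hM]
    · intro v hv' j
      rcases Multiset.mem_cons.1 hv' with e | e
      · subst e
        unfold one
        split_ifs <;> simp
      · have h1 := hv v e j
        rw [← one_erase S i hi]
        have : 0 ≤ (ee i : Fin m → ℤ) j := by
          simp only [ee, Pi.single_apply]; split_ifs <;> simp
        simp only [Pi.add_apply] at h1 ⊢
        constructor <;> linarith

lemma sum_fiber (t : Fin m → Finset ℤ) (i : Fin m) (s : Finset ℤ) (f : (Fin m → ℤ) → ZMod 2) :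
    ∑ z ∈ Fintype.piFinset (Function.update t i s), f z =
      ∑ z ∈ Fintype.piFinset (Function.update t i {0}), ∑ x ∈ s, f (Function.update z i x) := by
  rw [← Finset.sum_product']
  symm
  refine Finset.sum_bij' (fun p _ => Function.update p.1 i p.2)
    (fun z _ => (Function.update z i 0, z i)) ?_ ?_ ?_ ?_ ?_
  · rintro ⟨z, x⟩ h
    simp only [Finset.mem_product, Fintype.mem_piFinset] at h ⊢
    intro j
    by_cases e : j = i
    · subst e; simpa using h.2
    · simpa [e] using h.1 j
  · intro z h
    simp only [Finset.mem_product, Fintype.mem_piFinset] at h ⊢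
    refine ⟨fun j => ?_, by simpa using h i⟩
    by_cases e : j = i
    · subst e; simp
    · simpa [e] using h j
  · rintro ⟨z, x⟩ h
    simp only [Finset.mem_product, Fintype.mem_piFinset] at h
    have h0 : z i = 0 := by simpa using h.1 i
    simp only [Function.update_idem, Function.update_self, Prod.mk.injEq, and_true]
    rw [← h0, Function.update_eq_self]
  · intro z h
    simp
  · intro p h
    rfl

lemma tele_line (u : ℤ → ZMod 2) (a : ℤ) (k : ℕ) :
    ∑ x ∈ Finset.Ico a (a + k), (u (x + 1) + u x) = u (a + k) + u a := by
  induction k with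
  | zero => simp [CharTwo.add_self_eq_zero]
  | succ k ih =>
    have : Finset.Ico a (a + (k + 1 : ℕ)) = insert (a + k) (Finset.Ico a (a + k)) := by
      ext x; simp only [Finset.mem_Ico, Finset.mem_insert]; push_cast; omega
    rw [this, Finset.sum_insert (by simp), ih]
    have h2 := CharTwo.add_self_eq_zero (u (a + k))
    have e : a + ((k + 1 : ℕ) : ℤ) = a + k + 1 := by push_cast; ring
    rw [e]
    linear_combination h2

lemma tele (t : Fin m → Finset ℤ) (i : Fin m) (n : ℕ) (ht : t i = Finset.Ico (-(n:ℤ)) n)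
    (f : (Fin m → ℤ) → ZMod 2) :
    ∑ z ∈ Fintype.piFinset t, (f (z + ee i) + f z) =
      ∑ z ∈ Fintype.piFinset (Function.update t i {(n:ℤ)}), f z +
      ∑ z ∈ Fintype.piFinset (Function.update t i {-(n:ℤ)}), f z := by
  have h0 : t = Function.update t i (Finset.Ico (-(n:ℤ)) n) := by
    rw [← ht, Function.update_eq_self]
  conv_lhs => rw [h0]
  rw [sum_fiber, sum_fiber t i {(n:ℤ)}, sum_fiber t i {-(n:ℤ)}, ← Finset.sum_add_distrib]
  apply Finset.sum_congr rfl
  intro z _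
  rw [Finset.sum_singleton, Finset.sum_singleton]
  have h1 := tele_line (fun x => f (Function.update z i x)) (-(n:ℤ)) (2 * n)
  have h2 : (-(n:ℤ)) + (2 * n : ℕ) = n := by push_cast; ring
  rw [h2] at h1
  rw [← h1]
  apply Finset.sum_congr rfl
  intro x _
  congr 2
  ext j
  by_cases e : j = i
  · subst e; simp [ee]
  · simp [ee, e]

/-- free coordinates -/
def Z (σ : Fin m → SignType) : Finset (Fin m) := Finset.univ.filter (fun i => σ i = 0)
def supp (σ : Fin m → SignType) : Finset (Fin m) := Finset.univ.filter (fun i => σ i ≠ 0)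

noncomputable def tt (n : ℕ) (σ : Fin m → SignType) (i : Fin m) : Finset ℤ :=
  if σ i = 0 then Finset.Ico (-(n:ℤ)) n else {(σ i : ℤ) * n}

noncomputable def N (lam : (Fin m → ℤ) → ℕ) (n : ℕ) (b : Bool) (σ : Fin m → SignType) : ZMod 2 :=
  ∑ z ∈ Fintype.piFinset (tt n σ), W (Z σ).card (Z σ) z (fun M => Ph b (M.map lam))

lemma Z_update (σ : Fin m → SignType) (i : Fin m) (s : SignType) (hs : s ≠ 0) :
    Z (Function.update σ i s) = (Z σ).erase i := by
  ext j
  simp only [Z, Finset.mem_filter, Finset.mem_univ, true_and, Finset.mem_erase]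
  by_cases e : j = i
  · subst e; simp [hs]
  · simp [e]

lemma tt_update (n : ℕ) (σ : Fin m → SignType) (i : Fin m) (s : SignType) (hs : s ≠ 0) :
    tt n (Function.update σ i s) = Function.update (tt n σ) i {(s : ℤ) * n} := by
  ext1 j
  by_cases e : j = i
  · subst e; simp [tt, hs]
  · simp [tt, e]

lemma N_stokes (lam : (Fin m → ℤ) → ℕ) (n : ℕ) (σ : Fin m → SignType) (hZ : (Z σ).Nonempty) :
    N lam n true σ + N lam n false σ =
      ∑ i ∈ Z σ, (N lam n true (Function.update σ i 1) + N lam n true (Function.update σ i (-1))) := by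
  obtain ⟨k, hk⟩ : ∃ k, (Z σ).card = k + 1 :=
    ⟨(Z σ).card - 1, by have := Finset.card_pos.2 hZ; omega⟩
  have h1 : N lam n true σ + N lam n false σ = ∑ z ∈ Fintype.piFinset (tt n σ),
      W (k+1) (Z σ) z (D (fun M => Ph true (M.map lam))) := by
    unfold N
    rw [← Finset.sum_add_distrib]
    apply Finset.sum_congr rfl
    intro z _
    rw [hk, ← W_add]
    congr 1
    ext M
    rw [D_map, D_Ph]
    rfl
  rw [h1]
  simp only [W_D]
  rw [Finset.sum_comm]
  apply Finset.sum_congr rfl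
  intro i hi
  have hσ : σ i = 0 := by simpa [Z] using hi
  rw [tele (tt n σ) i n (by simp [tt, hσ])
    (fun z => W k ((Z σ).erase i) z (fun M => Ph true (M.map lam)))]
  have hc : ((Z σ).erase i).card = k := by rw [Finset.card_erase_of_mem hi, hk]; rfl
  unfold N
  rw [Z_update σ i 1 (by decide), Z_update σ i (-1) (by decide), tt_update n σ i 1 (by decide),
    tt_update n σ i (-1) (by decide), hc]
  simp

lemma mem_tt_neg {n : ℕ} {σ : Fin m → SignType} {z : Fin m → ℤ}
    (hz : z ∈ Fintype.piFinset (tt n σ)) : -z - one (Z σ) ∈ Fintype.piFinset (tt n (-σ)) := by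
  rw [Fintype.mem_piFinset] at hz ⊢
  intro i
  have := hz i
  simp only [tt, Pi.neg_apply, Pi.sub_apply, one, Z, Finset.mem_filter, Finset.mem_univ, true_and] at this ⊢
  by_cases h : σ i = 0
  · simp only [h, if_true, neg_zero, Finset.mem_Ico] at this ⊢
    omega
  · have h' : -σ i ≠ 0 := by simpa using h
    simp only [h, h', if_false, Finset.mem_singleton] at this ⊢
    rw [this]
    simp

lemma Z_neg (σ : Fin m → SignType) : Z (-σ) = Z σ := by
  ext i; simp [Z]

def Bd (n : ℕ) (z : Fin m → ℤ) : Prop := ∃ i, z i = n ∨ z i = -n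

lemma cell_props {n : ℕ} {σ : Fin m → SignType} (hσ : (supp σ).Nonempty) {z : Fin m → ℤ}
    (hz : z ∈ Fintype.piFinset (tt n σ)) {v : Fin m → ℤ}
    (hv : ∀ i, z i ≤ v i ∧ v i ≤ z i + one (Z σ) i) : Bd n v := by
  obtain ⟨i, hi⟩ := hσ
  have hi : σ i ≠ 0 := by simpa [supp] using hi
  refine ⟨i, ?_⟩
  have h1 := Fintype.mem_piFinset.1 hz i
  have h2 := hv i
  simp only [tt, hi, if_false, Finset.mem_singleton, one, Z, Finset.mem_filter, Finset.mem_univ,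
    true_and] at h1 h2
  have h3 : v i = z i := by omega
  rw [h3, h1]
  cases h : σ i
  · exact absurd h hi
  · right; simp
  · left; simp

structure Good (d n : ℕ) (lam : (Fin m → ℤ) → ℕ) : Prop where
  lt : ∀ z, Bd n z → lam z < 2 * d
  odd : ∀ z, Bd n z → lam (-z) = ng (lam z)
  nc : ∀ z w, Bd n z → Bd n w → (∀ i, |z i - w i| ≤ 1) → lam w ≠ ng (lam z)

lemma cell_nc {d n : ℕ} {lam : (Fin m → ℤ) → ℕ} (G : Good d n lam) {σ : Fin m → SignType}
    (hσ : (supp σ).Nonempty) {z : Fin m → ℤ}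
    (hz : z ∈ Fintype.piFinset (tt n σ)) {M : Multiset (Fin m → ℤ)}
    (hM : ∀ v ∈ M, ∀ i, z i ≤ v i ∧ v i ≤ z i + one (Z σ) i) :
    ∀ x ∈ M.map lam, ∀ y ∈ M.map lam, y ≠ ng x := by
  intro x hx y hy
  obtain ⟨v, hv, rfl⟩ := Multiset.mem_map.1 hx
  obtain ⟨w, hw, rfl⟩ := Multiset.mem_map.1 hy
  apply G.nc v w (cell_props hσ hz (hM v hv)) (cell_props hσ hz (hM w hw))
  intro i
  have h1 := hM v hv i
  have h2 := hM w hw i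
  have h3 : one (Z σ) i ≤ 1 := by unfold one; split_ifs <;> simp
  rw [abs_le]
  constructor <;> linarith

lemma N_neg {d n : ℕ} {lam : (Fin m → ℤ) → ℕ} (G : Good d n lam) {σ : Fin m → SignType}
    (hσ : (supp σ).Nonempty) : N lam n true (-σ) = N lam n false σ := by
  unfold N
  rw [Z_neg]
  symm
  refine Finset.sum_bij' (fun z _ => -z - one (Z σ)) (fun z _ => -z - one (Z σ)) ?_ ?_ ?_ ?_ ?_
  · intro z hz; exact mem_tt_neg hz
  · intro z hz
    have := mem_tt_neg hz
    rwa [Z_neg, neg_neg] at this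
  · intro z _; abel
  · intro z _; abel
  · intro z hz
    rw [W_neg _ _ _ _ rfl]
    apply W_congr
    intro M _ hM
    have h1 : (M.map (fun v => -v)).map lam = (M.map lam).map ng := by
      rw [Multiset.map_map, Multiset.map_map]
      apply Multiset.map_congr rfl
      intro v hv
      exact G.odd v (cell_props hσ hz (hM v hv))
    rw [h1, Ph_neg _ (cell_nc G hσ hz hM)]
    rfl

lemma N_top {d n : ℕ} {lam : (Fin m → ℤ) → ℕ} (G : Good d n lam) {σ : Fin m → SignType}
    (hσ : (supp σ).Nonempty) (hd : (Z σ).card = d) (b : Bool) : N lam n b σ = 0 := by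
  unfold N
  apply Finset.sum_eq_zero
  intro z hz
  have h0 : ∀ k (S : Finset (Fin m)) z, W k S z (fun _ => 0) = 0 := by
    intro k
    induction k with
    | zero => intros; rfl
    | succ k ih => intro S z; simp [W, ih]
  rw [← h0 (Z σ).card (Z σ) z]
  apply W_congr
  intro M hc hM
  by_contra hne
  have := Ph_len d (M.map lam) (cell_nc G hσ hz hM) (by
    intro x hx
    obtain ⟨v, hv, rfl⟩ := Multiset.mem_map.1 hx
    exact G.lt v (cell_props hσ hz (hM v hv))) b hne 0 (Nat.zero_le _) (fun _ _ => Nat.zero_le _)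
  rw [Multiset.card_map, hc] at this
  omega

lemma N_vertex (lam : (Fin m → ℤ) → ℕ) (n : ℕ) (σ : Fin m → SignType) (hZ : Z σ = ∅) :
    N lam n true σ + N lam n false σ = 1 := by
  have h1 : tt n σ = fun i => {(σ i : ℤ) * n} := by
    ext1 i
    have : i ∉ Z σ := by simp [hZ]
    have : σ i ≠ 0 := by simpa [Z] using this
    simp [tt, this]
  unfold N
  rw [h1, hZ, Fintype.piFinset_singleton]
  simp only [Finset.sum_singleton, Finset.card_empty, W, Multiset.map_singleton, Ph,
    Multiset.sort_singleton, g]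
  by_cases h : lam (fun i => (σ i : ℤ) * n) % 2 = 0 <;> simp [h]

def code (σ : Fin m → SignType) (i : Fin m) : ℕ := if σ i = 1 then 2 * i else 2 * i + 1

def MM (σ : Fin m → SignType) : Multiset ℕ := (supp σ).val.map (code σ)

lemma MM_update (σ : Fin m → SignType) (i : Fin m) (hi : i ∈ supp σ) :
    MM (Function.update σ i 0) = (MM σ).erase (code σ i) := by
  unfold MM
  rw [← Multiset.map_erase_of_mem _ _ hi]
  have : supp (Function.update σ i 0) = (supp σ).erase i := by
    ext j
    simp only [supp, Finset.mem_filter, Finset.mem_univ, true_and, Finset.mem_erase]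
    by_cases e : j = i
    · subst e; simp
    · simp [e]
  rw [this, Finset.erase_val]
  apply Multiset.map_congr rfl
  intro j hj
  have : j ≠ i := by
    exact (Finset.mem_erase.1 (show j ∈ (supp σ).erase i from hj)).1
  simp [code, this]

lemma Ph_MM_sum (σ : Fin m → SignType) :
    ∑ i ∈ supp σ, Ph true (MM (Function.update σ i 0)) = Ph true (MM σ) + Ph false (MM σ) := by
  rw [← Bool.not_true, ← D_Ph]
  unfold D
  conv_rhs => rw [MM]
  rw [Multiset.map_map]
  change _ = Finset.sum _ _
  apply Finset.sum_congr rfl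
  intro i hi
  simp only [Function.comp, Bool.not_true]
  rw [MM_update σ i hi]
  rfl

lemma supp_neg (σ : Fin m → SignType) : supp (-σ) = supp σ := by
  ext i; simp [supp]

lemma Ph_MM_neg (σ : Fin m → SignType) : Ph true (MM (-σ)) = Ph false (MM σ) := by
  have h1 : MM (-σ) = (MM σ).map ng := by
    unfold MM
    rw [supp_neg, Multiset.map_map]
    apply Multiset.map_congr rfl
    intro i hi
    have hi : σ i ≠ 0 := by simpa [supp] using hi
    change code (-σ) i = ng (code σ i)
    have hcases : ∀ s : SignType, s ≠ 0 → (s = 1 ∧ ¬ (-s = 1)) ∨ (¬ s = 1 ∧ -s = 1) := by decide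
    rcases hcases _ hi with ⟨h1, h2⟩ | ⟨h1, h2⟩
    · have c1 : code σ i = 2 * i := if_pos h1
      have c2 : code (-σ) i = 2 * i + 1 := if_neg h2
      rw [c1, c2, ng, if_pos (by omega)]
    · have c1 : code σ i = 2 * i + 1 := if_neg h1
      have c2 : code (-σ) i = 2 * i := if_pos h2
      rw [c1, c2, ng, if_neg (by omega)]; omega
  rw [h1, Ph_neg]
  · rfl
  · intro x hx y hy
    unfold MM at hx hy
    obtain ⟨i, hi, rfl⟩ := Multiset.mem_map.1 hx
    obtain ⟨j, hj, rfl⟩ := Multiset.mem_map.1 hy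
    intro e
    have hij : (i : ℕ) = j := by
      unfold code ng at e
      split_ifs at e <;> omega
    have : i = j := Fin.ext hij
    subst this
    unfold ng at e
    split_ifs at e <;> omega

lemma full_sum : ∑ σ ∈ Finset.univ.filter (fun σ : Fin m → SignType => (supp σ).card = m),
    Ph true (MM σ) = 1 := by
  have hval : ∀ σ : Fin m → SignType, (supp σ).card = m → (∀ i, σ i ≠ 0) ∧ Ph true (MM σ) =
      if (∀ i : Fin m, σ i = if (i:ℕ) % 2 = 0 then 1 else -1) then 1 else 0 := by
    intro σ hσ
    have hu : supp σ = Finset.univ := by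
      rw [← Finset.card_eq_iff_eq_univ, hσ, Fintype.card_fin]
    have hne : ∀ i, σ i ≠ 0 := by
      intro i
      have : i ∈ supp σ := by rw [hu]; simp
      simpa [supp] using this
    refine ⟨hne, ?_⟩
    have h1 : MM σ = ((List.ofFn (code σ) : List ℕ) : Multiset ℕ) := by
      unfold MM
      rw [hu, List.ofFn_eq_map]
      rfl
    have h2 : (MM σ).sort (· ≤ ·) = List.ofFn (code σ) := by
      rw [h1, Multiset.coe_sort]
      apply List.mergeSort_of_pairwise
      rw [List.pairwise_ofFn]
      intro i j hij
      have : (i:ℕ) < j := hij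
      unfold code
      split_ifs <;> simp <;> omega
    unfold Ph
    rw [h2, g_eq]
    congr 1
    apply propext
    simp only [List.length_ofFn, List.getElem_ofFn]
    have key : ∀ i : Fin m, (decide (code σ i % 2 = 0) = (true ^^ decide ((i:ℕ) % 2 = 1))) ↔
        (σ i = if (i:ℕ) % 2 = 0 then 1 else -1) := by
      intro i
      have hi := hne i
      have e1 : ¬ (SignType.neg = 1) := by decide
      have e2 : (SignType.pos = 1) := by decide
      have e3 : ¬ (SignType.pos = -1) := by decide
      have e4 : SignType.neg = -1 := by decide
      have e5 : (2 * (i:ℕ) + 1) % 2 = 1 := by omega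
      have e6 : (2 * (i:ℕ)) % 2 = 0 := by omega
      unfold code
      rcases Nat.mod_two_eq_zero_or_one (i:ℕ) with h | h <;> cases hs : σ i
      · exact absurd hs hi
      · simp [h, e1, e5]
      · simp [h, e2]
      · exact absurd hs hi
      · simp [h, e4, e5]
      · simp [h, e2]
    constructor
    · intro H i
      exact (key i).1 (H i i.2)
    · intro H i hi
      exact (key ⟨i, hi⟩).2 (H ⟨i, hi⟩)
  rw [Finset.sum_eq_single (fun i : Fin m => if (i:ℕ) % 2 = 0 then (1 : SignType) else -1)]
  · rw [(hval _ ?_).2]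
    · simp
    · have : supp (fun i : Fin m => if (i:ℕ) % 2 = 0 then (1 : SignType) else -1) = Finset.univ := by
        ext i
        simp only [supp, Finset.mem_filter, Finset.mem_univ, true_and, iff_true]
        split_ifs <;> decide
      rw [this]; simp
  · intro σ hσ hne
    rw [(hval σ (by simpa using hσ)).2, if_neg]
    intro H
    exact hne (funext H)
  · intro h
    exfalso
    apply h
    simp only [Finset.mem_filter, Finset.mem_univ, true_and]
    have : supp (fun i : Fin m => if (i:ℕ) % 2 = 0 then (1 : SignType) else -1) = Finset.univ := by
      ext i
      simp only [supp, Finset.mem_filter, Finset.mem_univ, true_and, iff_true]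
      split_ifs <;> decide
    rw [this]; simp

lemma card_Z_supp (σ : Fin m → SignType) : (Z σ).card + (supp σ).card = m := by
  have := Finset.card_filter_add_card_filter_not (s := (Finset.univ : Finset (Fin m))) (fun i => σ i = 0)
  simpa [Z, supp] using this

lemma supp_update0 (σ : Fin m → SignType) (i : Fin m) :
    supp (Function.update σ i 0) = (supp σ).erase i := by
  ext j
  simp only [supp, Finset.mem_filter, Finset.mem_univ, true_and, Finset.mem_erase]
  by_cases e : j = i
  · subst e; simp
  · simp [e]

lemma supp_update1 (σ : Fin m → SignType) (i : Fin m) (s : SignType) (hs : s ≠ 0) :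
    supp (Function.update σ i s) = insert i (supp σ) := by
  ext j
  simp only [supp, Finset.mem_filter, Finset.mem_univ, true_and, Finset.mem_insert]
  by_cases e : j = i
  · subst e; simp [hs]
  · simp [e]

def lev (m r : ℕ) : Finset (Fin m → SignType) := Finset.univ.filter (fun σ => (supp σ).card = r)

noncomputable def A (lam : (Fin m → ℤ) → ℕ) (n r : ℕ) : ZMod 2 :=
  ∑ σ ∈ lev m r, Ph true (MM σ) * (N lam n true σ + N lam n false σ)

lemma exchange (r : ℕ) (P Q : (Fin m → SignType) → ZMod 2) :
    ∑ σ ∈ lev m r, ∑ i ∈ Z σ, P σ * (Q (Function.update σ i 1) + Q (Function.update σ i (-1))) =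
    ∑ τ ∈ lev m (r+1), ∑ i ∈ supp τ, P (Function.update τ i 0) * Q τ := by
  have h1 : ∀ σ : Fin m → SignType, ∀ i,
      P σ * (Q (Function.update σ i 1) + Q (Function.update σ i (-1))) =
      ∑ s ∈ ({1, -1} : Finset SignType), P σ * Q (Function.update σ i s) := by
    intro σ i
    rw [Finset.sum_pair (by decide), mul_add]
  simp only [h1]
  rw [Finset.sum_sigma', Finset.sum_sigma', Finset.sum_sigma']
  have hs : ∀ s : SignType, s ∈ ({1, -1} : Finset SignType) ↔ s ≠ 0 := by decide
  refine Finset.sum_bij' (fun p _ => ⟨Function.update p.1.1 p.1.2 p.2, p.1.2⟩)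
    (fun q _ => ⟨⟨Function.update q.1 q.2 0, q.2⟩, q.1 q.2⟩) ?_ ?_ ?_ ?_ ?_
  · rintro ⟨⟨σ, i⟩, s⟩ h
    simp only [Finset.mem_sigma, hs, lev, Finset.mem_filter, Finset.mem_univ, true_and] at h ⊢
    obtain ⟨⟨h1, h2⟩, h3⟩ := h
    rw [supp_update1 σ i s h3]
    refine ⟨?_, by simp⟩
    rw [Finset.card_insert_of_notMem, h1]
    simp [Z, supp] at h2 ⊢
    exact h2
  · rintro ⟨τ, i⟩ h
    simp only [Finset.mem_sigma, hs, lev, Finset.mem_filter, Finset.mem_univ, true_and] at h ⊢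
    obtain ⟨h1, h2⟩ := h
    rw [supp_update0, Finset.card_erase_of_mem h2, h1]
    simp [Z, supp] at h2 ⊢
    exact h2
  · rintro ⟨⟨σ, i⟩, s⟩ h
    simp only [Finset.mem_sigma, hs, lev, Finset.mem_filter, Finset.mem_univ, true_and] at h
    obtain ⟨⟨h1, h2⟩, h3⟩ := h
    have h2 : σ i = 0 := by simpa [Z] using h2
    have : Function.update σ i 0 = σ := by rw [← h2, Function.update_eq_self]
    simp [this]
  · rintro ⟨τ, i⟩ h
    simp
  · rintro ⟨⟨σ, i⟩, s⟩ h
    simp only [Finset.mem_sigma, hs, lev, Finset.mem_filter, Finset.mem_univ, true_and] at h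
    obtain ⟨⟨h1, h2⟩, h3⟩ := h
    have h2 : σ i = 0 := by simpa [Z] using h2
    have : Function.update σ i 0 = σ := by rw [← h2, Function.update_eq_self]
    simp [this]

lemma A_step {d n : ℕ} {lam : (Fin m → ℤ) → ℕ} (G : Good d n lam) (r : ℕ) (hr1 : 1 ≤ r)
    (hr : r < m) : A lam n r = A lam n (r + 1) := by
  have h1 : A lam n r = ∑ σ ∈ lev m r, ∑ i ∈ Z σ, Ph true (MM σ) *
      (N lam n true (Function.update σ i 1) + N lam n true (Function.update σ i (-1))) := by
    unfold A
    apply Finset.sum_congr rfl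
    intro σ hσ
    have hc : (supp σ).card = r := by simpa [lev] using hσ
    have hz := card_Z_supp σ
    rw [N_stokes lam n σ (Finset.card_pos.1 (by omega)), Finset.mul_sum]
  rw [h1, exchange]
  have h2 : ∀ τ ∈ lev m (r+1), ∑ i ∈ supp τ, Ph true (MM (Function.update τ i 0)) * N lam n true τ
      = Ph true (MM τ) * N lam n true τ + Ph false (MM τ) * N lam n true τ := by
    intro τ _
    rw [← Finset.sum_mul, Ph_MM_sum, add_mul]
  rw [Finset.sum_congr rfl h2, Finset.sum_add_distrib]
  unfold A
  simp only [mul_add]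
  rw [Finset.sum_add_distrib]
  congr 1
  refine Finset.sum_bij' (fun τ _ => -τ) (fun τ _ => -τ) ?_ ?_ ?_ ?_ ?_
  · intro τ hτ; simpa [lev, supp_neg] using hτ
  · intro τ hτ; simpa [lev, supp_neg] using hτ
  · intro τ _; simp
  · intro τ _; simp
  · intro τ hτ
    have hc : (supp τ).card = r + 1 := by simpa [lev] using hτ
    rw [Ph_MM_neg, ← N_neg G (by rw [supp_neg]; exact Finset.card_pos.1 (by omega)), neg_neg]

theorem tucker (d n : ℕ) (lam : (Fin (d+1) → ℤ) → ℕ) (G : Good d n lam) : False := by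
  have h1 : ∀ r, r ≤ d → A lam n (r + 1) = A lam n 1 := by
    intro r
    induction r with
    | zero => intro _; rfl
    | succ r ih =>
      intro hr
      rw [← A_step G (r+1) (by omega) (by omega), ih (by omega)]
  have h2 : A lam n 1 = 0 := by
    unfold A
    apply Finset.sum_eq_zero
    intro σ hσ
    have hc : (supp σ).card = 1 := by simpa [lev] using hσ
    have hz := card_Z_supp σ
    have hn : (supp σ).Nonempty := Finset.card_pos.1 (by omega)
    rw [N_top G hn (by omega), N_top G hn (by omega)]
    simp
  have h3 : A lam n (d + 1) = 1 := by
    unfold A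
    rw [← full_sum (m := d + 1)]
    apply Finset.sum_congr rfl
    intro σ hσ
    have hc : (supp σ).card = d + 1 := by simpa [lev] using hσ
    have hz := card_Z_supp σ
    rw [N_vertex lam n σ (Finset.card_eq_zero.1 (by omega)), mul_one]
  rw [h1 d le_rfl, h2] at h3
  exact zero_ne_one h3

end grid
section top

lemma split {E : Type*} [NormedAddCommGroup E] (F : Set E) (hF : IsCompact F)
    (hs : ∀ x ∈ F, -x ∈ F) (hc : ∀ x ∈ F, -x ∉ connectedComponentIn F x) :
    ∃ A : Set E, IsCompact A ∧ A ⊆ F ∧ (∀ x ∈ A, -x ∉ A) ∧ ∀ x ∈ F, x ∈ A ∨ -x ∈ A := by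
  haveI : CompactSpace F := isCompact_iff_compactSpace.1 hF
  let T : F → F := fun x => ⟨-x.1, hs x.1 x.2⟩
  have hT : Continuous T := by
    apply Continuous.subtype_mk
    exact continuous_subtype_val.neg
  have hTT : ∀ x, T (T x) = x := fun x => Subtype.ext (neg_neg _)
  have key : ∃ A : Set F, IsClopen A ∧ (∀ x ∈ A, T x ∉ A) ∧ ∀ x ∈ (Set.univ : Set F), x ∈ A ∨ T x ∈ A := by
    refine IsCompact.induction_on (s := (Set.univ : Set F)) isCompact_univ
      (p := fun K => ∃ A : Set F, IsClopen A ∧ (∀ x ∈ A, T x ∉ A) ∧ ∀ x ∈ K, x ∈ A ∨ T x ∈ A) ?_ ?_ ?_ ?_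
    · exact ⟨∅, isClopen_empty, by simp, by simp⟩
    · rintro s t hst ⟨A, h1, h2, h3⟩
      exact ⟨A, h1, h2, fun x hx => h3 x (hst hx)⟩
    · rintro s t ⟨A, h1, h2, h3⟩ ⟨B, k1, k2, k3⟩
      refine ⟨A ∪ (B \ (A ∪ T ⁻¹' A)), h1.union (k1.diff (h1.union (h1.preimage hT))), ?_, ?_⟩
      · intro x hx
        have := h2 x
        have := k2 x
        have := hTT x
        simp only [Set.mem_union, Set.mem_sdiff, Set.mem_preimage] at hx ⊢
        grind
      · intro x hx
        have := h3 x
        have := k3 x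
        have := hTT x
        simp only [Set.mem_union, Set.mem_sdiff, Set.mem_preimage] at hx ⊢
        grind
    · intro x _
      have h1 : T x ∉ connectedComponent x := by
        intro h
        apply hc x.1 x.2
        rw [connectedComponentIn_eq_image x.2]
        exact ⟨T x, h, rfl⟩
      rw [connectedComponent_eq_iInter_isClopen, Set.mem_iInter] at h1
      push Not at h1
      obtain ⟨⟨C, hC, hxC⟩, hn⟩ := h1
      have hU : IsClopen (C \ T ⁻¹' C) := hC.diff (hC.preimage hT)
      refine ⟨C \ T ⁻¹' C, mem_nhdsWithin_of_mem_nhds (hU.isOpen.mem_nhds ⟨hxC, hn⟩),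
        C \ T ⁻¹' C, hU, ?_, fun y hy => Or.inl hy⟩
      intro y hy hy'
      exact hy.2 hy'.1
  obtain ⟨A, h1, h2, h3⟩ := key
  refine ⟨(↑) '' A, h1.isClosed.isCompact.image continuous_subtype_val, ?_, ?_, ?_⟩
  · rintro _ ⟨x, _, rfl⟩; exact x.2
  · rintro _ ⟨x, hx, rfl⟩ ⟨y, hy, e⟩
    apply h2 x hx
    have : T x = y := Subtype.ext e.symm
    rwa [this]
  · intro x hx
    rcases h3 ⟨x, hx⟩ trivial with h | h
    · exact Or.inl ⟨_, h, rfl⟩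
    · exact Or.inr ⟨_, h, rfl⟩

lemma gap {E : Type*} [NormedAddCommGroup E] (A : Set E) (hA : IsCompact A)
    (h : ∀ x ∈ A, -x ∉ A) : ∃ δ > 0, ∀ x y, x ∈ A → -y ∈ A → δ ≤ dist x y := by
  have hd : Disjoint A (-A) := by
    rw [Set.disjoint_left]
    intro x hx hx'
    exact h x hx (by simpa using hx')
  obtain ⟨δ, hδ, hdis⟩ := hd.exists_thickenings hA hA.neg.isClosed
  refine ⟨δ, hδ, fun x y hx hy => ?_⟩
  by_contra hlt
  push Not at hlt
  rw [Set.disjoint_left] at hdis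
  apply hdis (a := y)
  · rw [Metric.mem_thickening_iff]
    exact ⟨x, hx, by rwa [dist_comm]⟩
  · exact Metric.self_subset_thickening hδ _ (by simpa using hy)

lemma normalize_dist {E : Type*} [NormedAddCommGroup E] [NormedSpace ℝ E] (x y : E)
    (hx : x ≠ 0) (hy : y ≠ 0) :
    dist ((‖x‖⁻¹ : ℝ) • x) ((‖y‖⁻¹ : ℝ) • y) ≤ 2 * ‖x - y‖ / ‖x‖ := by
  have hx' : 0 < ‖x‖ := norm_pos_iff.2 hx
  have hy' : 0 < ‖y‖ := norm_pos_iff.2 hy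
  have e : (‖x‖⁻¹ : ℝ) • x - (‖y‖⁻¹ : ℝ) • y = (‖x‖⁻¹ : ℝ) • (x - y) + (‖x‖⁻¹ - ‖y‖⁻¹ : ℝ) • y := by
    rw [smul_sub, sub_smul]; abel
  have h2 : |(‖x‖⁻¹ - ‖y‖⁻¹ : ℝ)| * ‖y‖ = ‖x‖⁻¹ * |‖y‖ - ‖x‖| := by
    have : (‖x‖⁻¹ - ‖y‖⁻¹ : ℝ) = ‖x‖⁻¹ * ‖y‖⁻¹ * (‖y‖ - ‖x‖) := by field_simp
    rw [this, abs_mul, abs_of_pos (by positivity)]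
    field_simp
  have h3 : |‖y‖ - ‖x‖| ≤ ‖x - y‖ := by
    rw [norm_sub_rev]; exact abs_norm_sub_norm_le y x
  rw [dist_eq_norm, e]
  calc _ ≤ ‖(‖x‖⁻¹ : ℝ) • (x - y)‖ + ‖(‖x‖⁻¹ - ‖y‖⁻¹ : ℝ) • y‖ := norm_add_le _ _
    _ = ‖x‖⁻¹ * ‖x - y‖ + ‖x‖⁻¹ * |‖y‖ - ‖x‖| := by
      rw [norm_smul, norm_smul, Real.norm_eq_abs, Real.norm_eq_abs, h2, abs_of_pos (by positivity)]
    _ ≤ ‖x‖⁻¹ * ‖x - y‖ + ‖x‖⁻¹ * ‖x - y‖ := by gcongr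
    _ = _ := by field_simp; ring

end top
end SBU

theorem signed_borsuk_ulam_closed (d : ℕ)
    (F : Fin d → Set (EuclideanSpace ℝ (Fin (d + 1))))
    (hsub : ∀ i, F i ⊆ Metric.sphere (0 : EuclideanSpace ℝ (Fin (d + 1))) 1)
    (hclosed : ∀ i, IsClosed (F i))
    (hsymm : ∀ i, ∀ x ∈ F i, -x ∈ F i)
    (hcover : Metric.sphere (0 : EuclideanSpace ℝ (Fin (d + 1))) 1 ⊆ ⋃ i, F i) :
    ∃ i, ∃ x ∈ F i, -x ∈ connectedComponentIn (F i) x := by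
  classical
  by_contra hcon
  push Not at hcon
  have hcomp : ∀ i, IsCompact (F i) := fun i =>
    (isCompact_sphere _ _).of_isClosed_subset (hclosed i) (hsub i)
  choose A hA1 hA2 hA3 hA4 using fun i => SBU.split (F i) (hcomp i) (hsymm i) (hcon i)
  choose δ hδ hgap using fun i => SBU.gap (A i) (hA1 i) (hA3 i)
  obtain ⟨ε, hε, hεδ⟩ : ∃ ε > 0, ∀ i, ε ≤ δ i := by
    rcases isEmpty_or_nonempty (Fin d) with h | h
    · exact ⟨1, one_pos, fun i => (h.false i).elim⟩
    · obtain ⟨i0, hi0⟩ := Finite.exists_min δ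
      exact ⟨δ i0, hδ i0, hi0⟩
  -- index of a point
  have hidx : ∀ x : EuclideanSpace ℝ (Fin (d + 1)), ∃ i : ℕ, x ≠ 0 →
      ∃ h : i < d, ((‖x‖⁻¹ : ℝ) • x) ∈ F ⟨i, h⟩ := by
    intro x
    by_cases hx : x = 0
    · exact ⟨0, fun h => absurd hx h⟩
    · have : ((‖x‖⁻¹ : ℝ) • x) ∈ Metric.sphere (0 : EuclideanSpace ℝ (Fin (d + 1))) 1 := by
        rw [mem_sphere_zero_iff_norm, norm_smul, norm_inv, norm_norm,
          inv_mul_cancel₀ (norm_ne_zero_iff.2 hx)]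
      obtain ⟨i, hi⟩ := Set.mem_iUnion.1 (hcover this)
      exact ⟨i, fun _ => ⟨i.2, hi⟩⟩
  let idx : EuclideanSpace ℝ (Fin (d + 1)) → ℕ := fun x => Nat.find (hidx x)
  have idx_spec : ∀ x, x ≠ 0 → ∃ h : idx x < d, ((‖x‖⁻¹ : ℝ) • x) ∈ F ⟨idx x, h⟩ :=
    fun x => Nat.find_spec (hidx x)
  have idx_neg : ∀ x, idx (-x) = idx x := by
    intro x
    apply Nat.find_congr'
    intro i
    rw [norm_neg, smul_neg, ne_eq, neg_eq_zero]
    constructor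
    · intro H hx
      obtain ⟨h1, h2⟩ := H hx
      exact ⟨h1, by simpa using hsymm _ _ h2⟩
    · intro H hx
      obtain ⟨h1, h2⟩ := H hx
      exact ⟨h1, hsymm _ _ h2⟩
  let pos : EuclideanSpace ℝ (Fin (d + 1)) → Prop := fun x =>
    ∃ h : idx x < d, ((‖x‖⁻¹ : ℝ) • x) ∈ A ⟨idx x, h⟩
  have pos_neg : ∀ x, x ≠ 0 → (pos (-x) ↔ ¬ pos x) := by
    intro x hx
    obtain ⟨h1, h2⟩ := idx_spec x hx
    have e1 : pos (-x) ↔ -((‖x‖⁻¹ : ℝ) • x) ∈ A ⟨idx x, h1⟩ := by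
      simp only [pos, norm_neg, smul_neg, idx_neg]
      exact ⟨fun ⟨_, h⟩ => h, fun h => ⟨h1, h⟩⟩
    have e2 : pos x ↔ ((‖x‖⁻¹ : ℝ) • x) ∈ A ⟨idx x, h1⟩ :=
      ⟨fun ⟨_, h⟩ => h, fun h => ⟨h1, h⟩⟩
    rw [e1, e2]
    have h3 := hA3 ⟨idx x, h1⟩ ((‖x‖⁻¹ : ℝ) • x)
    have h4 := hA4 ⟨idx x, h1⟩ _ h2
    tauto
  let lab : EuclideanSpace ℝ (Fin (d + 1)) → ℕ := fun x => if pos x then 2 * idx x else 2 * idx x + 1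
  let emb : (Fin (d+1) → ℤ) → EuclideanSpace ℝ (Fin (d + 1)) := fun z =>
    WithLp.toLp 2 (fun i => (z i : ℝ))
  have emb_neg : ∀ z, emb (-z) = - emb z := by
    intro z; ext i; simp [emb]
  obtain ⟨n, hn⟩ := exists_nat_gt (2 * Real.sqrt (d + 1) / ε)
  have hn0 : (0 : ℝ) < n := lt_of_le_of_lt (by positivity) hn
  have hnorm : ∀ z, SBU.Bd n z → (n : ℝ) ≤ ‖emb z‖ := by
    rintro z ⟨i, hi⟩
    have h1 := PiLp.norm_apply_le (emb z) i
    have h2 : ‖(emb z) i‖ = n := by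
      rcases hi with h | h <;> simp [emb, h]
    rwa [h2] at h1
  have hne : ∀ z, SBU.Bd n z → emb z ≠ 0 := by
    intro z hz h0
    have := hnorm z hz
    rw [h0, norm_zero] at this
    linarith
  have hdist : ∀ z w, (∀ i, |z i - w i| ≤ 1) → ‖emb z - emb w‖ ≤ Real.sqrt (d + 1) := by
    intro z w h
    rw [EuclideanSpace.norm_eq]
    apply Real.sqrt_le_sqrt
    calc _ ≤ ∑ i : Fin (d+1), (1 : ℝ) := by
          apply Finset.sum_le_sum
          intro i _
          have h1 : (emb z - emb w) i = ((z i - w i : ℤ) : ℝ) := by simp [emb]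
          rw [h1, Real.norm_eq_abs, sq_abs, sq_le_one_iff_abs_le_one]
          exact_mod_cast h i
      _ = _ := by simp
  have hclose : ∀ z w, SBU.Bd n z → SBU.Bd n w → (∀ i, |z i - w i| ≤ 1) →
      dist ((‖emb z‖⁻¹ : ℝ) • emb z) ((‖emb w‖⁻¹ : ℝ) • emb w) < ε := by
    intro z w hz hw h
    refine lt_of_le_of_lt (SBU.normalize_dist _ _ (hne z hz) (hne w hw)) ?_
    have h1 := hdist z w h
    have h2 := hnorm z hz
    calc 2 * ‖emb z - emb w‖ / ‖emb z‖ ≤ 2 * Real.sqrt (d + 1) / n := by gcongr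
      _ < ε := by
        rw [div_lt_iff₀ hε] at hn
        rw [div_lt_iff₀ hn0]
        linarith
  refine SBU.tucker d n (fun z => lab (emb z)) ⟨?_, ?_, ?_⟩
  · intro z hz
    obtain ⟨h1, _⟩ := idx_spec _ (hne z hz)
    simp only [lab]
    split_ifs <;> omega
  · intro z hz
    have := pos_neg _ (hne z hz)
    simp only [lab, emb_neg, idx_neg, SBU.ng, this]
    by_cases hp : pos (emb z)
    · simp [hp]
    · rw [if_pos hp, if_neg hp, if_neg (by omega)]; omega
  · intro z w hz hw hzw heq
    have hc1 := hclose z w hz hw hzw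
    have hz0 := hne z hz
    have hw0 := hne w hw
    have hidx_eq : idx (emb w) = idx (emb z) := by
      simp only [lab, SBU.ng] at heq
      split_ifs at heq <;> omega
    have hpos : ¬ (pos (emb w) ↔ pos (emb z)) := by
      intro hiff
      simp only [lab, SBU.ng, hiff, hidx_eq] at heq
      split_ifs at heq <;> omega
    have main : ∀ x y, x ≠ 0 → y ≠ 0 → idx x = idx y → pos x → ¬ pos y →
        dist ((‖x‖⁻¹ : ℝ) • x) ((‖y‖⁻¹ : ℝ) • y) < ε → False := by
      intro x y hx hy hxy hpx hpy hlt
      obtain ⟨h1, h2⟩ := hpx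
      obtain ⟨h3, h4⟩ := (pos_neg y hy).2 hpy
      have e : (⟨idx (-y), h3⟩ : Fin d) = ⟨idx x, h1⟩ := by
        apply Fin.ext; simp only [idx_neg, hxy]
      rw [e, norm_neg, smul_neg] at h4
      have := hgap _ _ _ h2 h4
      have := hεδ ⟨idx x, h1⟩
      linarith
    by_cases hp : pos (emb z)
    · have : ¬ pos (emb w) := fun h => hpos ⟨fun _ => hp, fun _ => h⟩
      exact main _ _ hz0 hw0 hidx_eq.symm hp this hc1
    · have : pos (emb w) := by
        by_contra h
        exact hpos ⟨fun h' => absurd h' h, fun h' => absurd h' hp⟩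
      rw [dist_comm] at hc1
      exact main _ _ hw0 hz0 hidx_eq this hp hc1
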